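/- Let S = {x_1, …, x_n} be a GCD closed set of positive integers and let α > 0 be a real number. Then the power LCM matrix [S]_{N^α} with ij-entry lcm(x_i, x_j)^α and the matrix (S)_{1/N^α} with ij-entry gcd(x_i, x_j)^{−α} are both nonsingular if and only if Ψ_{S,1/N^α}(x_i) ≠ 0 for all i = 1, …, n. -/

import Mathlib

/-- The Möbius function of the poset `(S, ∣)` of a finite set `S` of positive integers
ordered by divisibility: `mobiusOn S y y = 1` and, for `y ∣ x`, `y ≠ x`,
`mobiusOn S y x = -∑_{z ∈ S, y ∣ z ∣ x, z ≠ x} mobiusOn S y z`. -/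
def mobiusOn (S : Finset ℕ) (y : ℕ) : ℕ → ℤ
  | x =>
    if x = y then 1
    else if hx : x = 0 then 0
    else
      -∑ z ∈ (S.filter fun z => y ∣ z ∧ z ∣ x ∧ z ≠ x).attach,
        mobiusOn S y z.1
termination_by x => x
decreasing_by
  have hz := z.2
  simp only [Finset.mem_filter] at hz
  exact lt_of_le_of_ne (Nat.le_of_dvd (Nat.pos_of_ne_zero hx) hz.2.2.1) hz.2.2.2

/-!
Write `E` for the matrix of the divisibility relation on `S`. The Möbius matrix of `(S, ∣)` is an
integral inverse of `E`, so `det E ^ 2 = 1`. By Möbius inversion `f (x j)` is the sum of `Ψ_f (x k)`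
over `x k ∣ x j`; as `S` is GCD closed and `d ∣ gcd a b ↔ d ∣ a ∧ d ∣ b`, this says
`[f (gcd (x i) (x j))] = Eᵀ * diagonal Ψ_f * E`, a matrix of determinant `∏ i, Ψ_f (x i)`. If
`f (gcd a b) * f (lcm a b) = f a * f b`, then rescaling the rows and columns of
`[1 / f (gcd (x i) (x j))]` by the `f (x i)` gives `[f (lcm (x i) (x j))]`.
-/

open Finset Matrix

section Mobius

variable {S : Finset ℕ} {x y : ℕ}

theorem mobiusOn_self : mobiusOn S y y = 1 := by
  rw [mobiusOn, if_pos rfl]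

theorem mobiusOn_of_ne (hxy : x ≠ y) (hx : x ≠ 0) :
    mobiusOn S y x = -∑ z ∈ S with y ∣ z ∧ z ∣ x ∧ z ≠ x, mobiusOn S y z := by
  rw [mobiusOn, if_neg hxy, dif_neg hx, sum_attach _ (mobiusOn S y)]

theorem mobiusOn_eq_zero_of_not_dvd (hyx : ¬y ∣ x) : mobiusOn S y x = 0 := by
  have hxy : x ≠ y := fun h => hyx h.symm.dvd
  have hx : x ≠ 0 := fun h => hyx (h ▸ dvd_zero y)
  rw [mobiusOn_of_ne hxy hx, filter_false_of_mem, sum_empty, neg_zero]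
  exact fun z _ hz => hyx (hz.1.trans hz.2.1)

theorem sum_mobiusOn_filter_dvd (hxS : x ∈ S) (hx : x ≠ 0) :
    ∑ z ∈ S with z ∣ x, mobiusOn S y z = if y = x then 1 else 0 := by
  have split_top : ∑ z ∈ S with z ∣ x, mobiusOn S y z =
      mobiusOn S y x + ∑ z ∈ S with y ∣ z ∧ z ∣ x ∧ z ≠ x, mobiusOn S y z := by
    rw [← add_sum_erase {z ∈ S | z ∣ x} _ (mem_filter.2 ⟨hxS, dvd_rfl⟩)]
    congr 1
    refine (sum_subset (fun z hz => ?_) fun z hz hz' => mobiusOn_eq_zero_of_not_dvd ?_).symm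
    · simp_all only [mem_filter, mem_erase, ne_eq, not_false_eq_true, and_self]
    · simp_all only [mem_filter, mem_erase, ne_eq, not_false_eq_true, and_true, true_and]
  rw [split_top]
  split_ifs with hyx
  · subst hyx
    rw [mobiusOn_self, filter_false_of_mem, sum_empty, add_zero]
    exact fun z _ hz => hz.2.2 (Nat.dvd_antisymm hz.2.1 hz.1)
  · rw [mobiusOn_of_ne (Ne.symm hyx) hx, neg_add_cancel]

end Mobius

variable {ι R K : Type*} [Fintype ι] [CommRing R] [Field K] {x : ι → ℕ}

/-- The zeta matrix of the family `x` ordered by divisibility. Its entries are integers, so that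
its invertibility can be used over every commutative ring. -/
def zetaMatrix (x : ι → ℕ) : Matrix ι ι ℤ :=
  of fun i j => if x i ∣ x j then 1 else 0

/-- The matrix of the Möbius function of `({x i}, ∣)`, the inverse of `zetaMatrix x`. -/
def mobiusMatrix (x : ι → ℕ) : Matrix ι ι ℤ :=
  of fun i j => mobiusOn (univ.image x) (x i) (x j)

/-- The function `Ψ_{S,f}` on the indices of `S = {x i}`: the Möbius inverse of `f` with respect
to summation over the divisors in `S`. -/
def mobiusTransform (x : ι → ℕ) (f : ℕ → R) (i : ι) : R :=
  ∑ k with x k ∣ x i, (mobiusOn (univ.image x) (x k) (x i) : R) * f (x k)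

theorem mobiusMatrix_mul_zetaMatrix [DecidableEq ι] (hpos : ∀ i, 0 < x i)
    (hinj : Function.Injective x) : mobiusMatrix x * zetaMatrix x = 1 := by
  ext i j
  have hsum := sum_mobiusOn_filter_dvd (y := x i) (mem_image_of_mem x (mem_univ j)) (hpos j).ne'
  rw [sum_filter, sum_image hinj.injOn] at hsum
  simpa [mul_apply, one_apply, mobiusMatrix, zetaMatrix, hinj.eq_iff] using hsum

theorem mobiusTransform_eq_vecMul (f : ℕ → R) :
    mobiusTransform x f = (f ∘ x) ᵥ* (mobiusMatrix x).map (Int.castRingHom R) := by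
  ext i
  rw [mobiusTransform, sum_filter_of_ne]
  · simp [vecMul, dotProduct, mobiusMatrix, mul_comm]
  · intro k _ hk
    contrapose! hk
    rw [mobiusOn_eq_zero_of_not_dvd hk, Int.cast_zero, zero_mul]

theorem sum_mobiusTransform_filter_dvd (hpos : ∀ i, 0 < x i) (hinj : Function.Injective x)
    (f : ℕ → R) (j : ι) : ∑ k with x k ∣ x j, mobiusTransform x f k = f (x j) := by
  classical
  have inversion : mobiusTransform x f ᵥ* (zetaMatrix x).map (Int.castRingHom R) = f ∘ x := by
    rw [mobiusTransform_eq_vecMul, vecMul_vecMul, ← Matrix.map_mul,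
      mobiusMatrix_mul_zetaMatrix hpos hinj, Matrix.map_one _ (map_zero _) (map_one _), vecMul_one]
  simpa [vecMul, dotProduct, zetaMatrix, sum_filter] using congrFun inversion j

variable [DecidableEq ι]

theorem det_zetaMatrix_sq (hpos : ∀ i, 0 < x i) (hinj : Function.Injective x) :
    (zetaMatrix x).det ^ 2 = 1 :=
  Int.isUnit_sq <|
    (zetaMatrix x).isUnit_det_of_left_inverse (mobiusMatrix_mul_zetaMatrix hpos hinj)

theorem gcdMatrix_eq_mul_diagonal_mul (hpos : ∀ i, 0 < x i) (hinj : Function.Injective x)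
    (hgcd : ∀ i j, ∃ k, x k = (x i).gcd (x j)) (f : ℕ → R) :
    of (fun i j => f ((x i).gcd (x j))) =
      ((zetaMatrix x).map (Int.castRingHom R))ᵀ * diagonal (mobiusTransform x f) *
        (zetaMatrix x).map (Int.castRingHom R) := by
  ext i j
  obtain ⟨l, hl⟩ := hgcd i j
  rw [of_apply, ← hl, ← sum_mobiusTransform_filter_dvd hpos hinj f, hl, Nat.gcd_comm, mul_apply]
  simp [mul_diagonal, zetaMatrix, Nat.dvd_gcd_iff, sum_filter, ite_and]

theorem det_gcdMatrix (hpos : ∀ i, 0 < x i) (hinj : Function.Injective x)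
    (hgcd : ∀ i j, ∃ k, x k = (x i).gcd (x j)) (f : ℕ → R) :
    (of fun i j => f ((x i).gcd (x j))).det = ∏ i, mobiusTransform x f i := by
  have det_sq : ((zetaMatrix x).map (Int.castRingHom R)).det ^ 2 = 1 := by
    rw [← RingHom.mapMatrix_apply, ← RingHom.map_det, ← map_pow, det_zetaMatrix_sq hpos hinj,
      map_one]
  rw [gcdMatrix_eq_mul_diagonal_mul hpos hinj hgcd, det_mul, det_mul, det_transpose, det_diagonal,
    mul_right_comm, ← sq, det_sq, one_mul]

theorem lcmMatrix_eq_diagonal_mul_mul_diagonal {f : ℕ → K}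
    (hf : ∀ a b, f (a.gcd b) * f (a.lcm b) = f a * f b)
    (hf₀ : ∀ i j, f ((x i).gcd (x j)) ≠ 0) :
    of (fun i j => f ((x i).lcm (x j))) =
      diagonal (f ∘ x) * of (fun i j => (f ((x i).gcd (x j)))⁻¹) * diagonal (f ∘ x) := by
  ext i j
  rw [mul_diagonal, diagonal_mul, of_apply, of_apply, Function.comp_apply, Function.comp_apply,
    mul_right_comm, ← hf, mul_comm (f _), mul_inv_cancel_right₀ (hf₀ i j)]

theorem det_lcmMatrix (hpos : ∀ i, 0 < x i) (hinj : Function.Injective x)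
    (hgcd : ∀ i j, ∃ k, x k = (x i).gcd (x j)) {f : ℕ → K}
    (hf : ∀ a b, f (a.gcd b) * f (a.lcm b) = f a * f b) (hf₀ : ∀ i, f (x i) ≠ 0) :
    (of fun i j => f ((x i).lcm (x j))).det =
      (∏ i, f (x i)) ^ 2 * ∏ i, mobiusTransform x (fun m => (f m)⁻¹) i := by
  have hf_gcd (i j : ι) : f ((x i).gcd (x j)) ≠ 0 := by
    obtain ⟨k, hk⟩ := hgcd i j
    exact hk ▸ hf₀ k
  rw [lcmMatrix_eq_diagonal_mul_mul_diagonal hf hf_gcd, det_mul, det_mul, det_diagonal,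
    det_gcdMatrix hpos hinj hgcd fun m => (f m)⁻¹, mul_right_comm, ← sq]
  rfl

theorem gcd_rpow_mul_lcm_rpow (α : ℝ) (a b : ℕ) :
    (a.gcd b : ℝ) ^ α * (a.lcm b : ℝ) ^ α = (a : ℝ) ^ α * (b : ℝ) ^ α := by
  rw [← Real.mul_rpow (Nat.cast_nonneg _) (Nat.cast_nonneg _),
    ← Real.mul_rpow (Nat.cast_nonneg _) (Nat.cast_nonneg _), ← Nat.cast_mul, ← Nat.cast_mul,
    Nat.gcd_mul_lcm]

theorem stmt_11_general (hpos : ∀ i, 0 < x i) (hinj : Function.Injective x)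
    (hgcd : ∀ i j, ∃ k, x k = (x i).gcd (x j)) {f : ℕ → K}
    (hf : ∀ a b, f (a.gcd b) * f (a.lcm b) = f a * f b) (hf₀ : ∀ i, f (x i) ≠ 0) :
    ((of fun i j => f ((x i).lcm (x j))).det ≠ 0 ↔
        ∀ i, ∑ k with x k ∣ x i, (mobiusOn (univ.image x) (x k) (x i) : K) / f (x k) ≠ 0) ∧
      ((of fun i j => (f ((x i).gcd (x j)))⁻¹).det ≠ 0 ↔
        ∀ i, ∑ k with x k ∣ x i, (mobiusOn (univ.image x) (x k) (x i) : K) / f (x k) ≠ 0) := by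
  have prod_sq_ne_zero : (∏ i, f (x i)) ^ 2 ≠ 0 :=
    pow_ne_zero 2 (prod_ne_zero_iff.2 fun i _ => hf₀ i)
  rw [det_lcmMatrix hpos hinj hgcd hf hf₀, det_gcdMatrix hpos hinj hgcd fun m => (f m)⁻¹,
    mul_ne_zero_iff_left prod_sq_ne_zero, prod_ne_zero_iff]
  simp only [mobiusTransform, div_eq_mul_inv, mem_univ, true_imp_iff, and_self]

/-- Let `S = {x 0, …, x (n-1)}` be a GCD closed set of positive integers and `α > 0` a
real number.  The power LCM matrix `[lcm (x i) (x j) ^ α]` and the matrix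
`[gcd (x i) (x j) ^ (-α)]` are both nonsingular if and only if
`Ψ_{S,1/N^α}(x i) = ∑_{x k ∣ x i} μ_S(x k, x i) / (x k) ^ α ≠ 0` for every `i`. -/
theorem stmt_11 (n : ℕ) (x : Fin n → ℕ) (hpos : ∀ i, 0 < x i)
    (hinj : Function.Injective x)
    (hgcd : ∀ i j, ∃ k, x k = Nat.gcd (x i) (x j)) (α : ℝ) (hα : 0 < α) :
    ((Matrix.of fun i j => (Nat.lcm (x i) (x j) : ℝ) ^ α).det ≠ 0 ∧
        (Matrix.of fun i j => (Nat.gcd (x i) (x j) : ℝ) ^ (-α)).det ≠ 0) ↔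
      ∀ i, (∑ k ∈ Finset.univ.filter fun k => x k ∣ x i,
          (mobiusOn (Finset.image x Finset.univ) (x k) (x i) : ℝ) / (x k : ℝ) ^ α) ≠ 0 := by
  have ⟨hlcm, hgcd_inv⟩ := stmt_11_general (f := fun m => (m : ℝ) ^ α) hpos hinj hgcd
    (gcd_rpow_mul_lcm_rpow α) fun i => (Real.rpow_pos_of_pos (Nat.cast_pos.2 (hpos i)) α).ne'
  simp only [Real.rpow_neg (Nat.cast_nonneg _), hlcm, hgcd_inv, and_self]
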